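/- arXiv:2407.20770 — 3 statements merged into one kernel-verified Lean document; each statement's English description precedes it below -/
import Mathlib

section
/- Let $A$ be an $n\times n$ real matrix with nonnegative entries whose associated directed graph (with an edge from $j$ to $i$ whenever $A[i,j] > 0$) is strongly connected, and let $\gamma_1,\dots,\gamma_p$ be strictly positive reals. Then the directed graph associated with the $np\times np$ block matrix $\tilde{A}$ (with an edge from $(k,j)$ to $(l,i)$ whenever $\tilde{A}[(l,i),(k,j)] > 0$) is strongly connected: for every pair of indices $(l,i)$ and $(k,j)$ there exists $m \ge 1$ with $(\tilde{A}^m)[(l,i),(k,j)] > 0$. -/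
/-!
Every layer `{k} × n` of the block matrix carries a copy of the graph of `A`, and distinct layers
`l`, `k` are joined by the edges `(l, i) ⟶ (k, i)`. So one reaches `(k, j)` from `(l, i)` by first
jumping to `(k, i)`, if `l ≠ k`, and then following inside layer `k` a copy of a path of positive
length from `i` to `j`. Here, as in `Matrix.toQuiver`, an edge `a ⟶ b` of the graph of `M` means
`0 < M a b`; this reverses the edges of the informal statement, which does not affect strong
connectivity. -/

section LayeredMatrix

open Quiver

lemma length_mapPath {V W : Type*} [Quiver V] [Quiver W] (F : V ⥤q W) {a b : V} (q : Path a b) :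
    (F.mapPath q).length = q.length := by
  induction q with
  | nil => rfl
  | cons q e ih => rw [Prefunctor.mapPath_cons, Path.length_cons, Path.length_cons, ih]

variable {n p R : Type*} [DecidableEq n] [DecidableEq p]

/-- The block matrix `Ã` made of one copy of `A` per index `l : p`: the diagonal block at `l` is
`γ l • A`, and the block at `(l, k)` with `k ≠ l` is `γ k • 1`. -/
def layeredMatrix [Mul R] [Zero R] (γ : p → R) (A : Matrix n n R) : Matrix (p × n) (p × n) R :=
  fun li kj => if kj.1 = li.1 then γ li.1 * A li.2 kj.2 else if kj.2 = li.2 then γ kj.1 else 0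

lemma layeredMatrix_apply_same_layer [Mul R] [Zero R] (γ : p → R) (A : Matrix n n R)
    (l : p) (i j : n) : layeredMatrix γ A (l, i) (l, j) = γ l * A i j :=
  if_pos rfl

lemma layeredMatrix_apply_same_node [Mul R] [Zero R] (γ : p → R) (A : Matrix n n R)
    {l k : p} (hkl : k ≠ l) (i : n) : layeredMatrix γ A (l, i) (k, i) = γ k :=
  (if_neg hkl).trans (if_pos rfl)

lemma layeredMatrix_nonneg [MulZeroClass R] [Preorder R] [PosMulMono R] {γ : p → R}
    {A : Matrix n n R} (hγ : ∀ l, 0 ≤ γ l) (hA : ∀ i j, 0 ≤ A i j) (a b : p × n) :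
    0 ≤ layeredMatrix γ A a b := by
  unfold layeredMatrix
  split_ifs
  · exact mul_nonneg (hγ _) (hA _ _)
  · exact hγ _
  · exact le_rfl

variable [Ring R] [LinearOrder R] {γ : p → R}

/-- The inclusion of the graph of `A` as layer `k` of the graph of `layeredMatrix γ A`, used to
transport paths into that layer. -/
def layerInclusion [PosMulStrictMono R] (A : Matrix n n R) {k : p} (hk : 0 < γ k) :
    letI := A.toQuiver
    letI := (layeredMatrix γ A).toQuiver
    n ⥤q (p × n) :=
  letI := A.toQuiver
  letI := (layeredMatrix γ A).toQuiver
  { obj := fun i => (k, i)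
    map := fun {i j} e =>
      ⟨(mul_pos hk e.down).trans_eq (layeredMatrix_apply_same_layer γ A k i j).symm⟩ }

lemma nonempty_path_same_node (A : Matrix n n R) (l : p) {k : p} (hk : 0 < γ k) (i : n) :
    letI := (layeredMatrix γ A).toQuiver
    Nonempty (Path (l, i) (k, i)) := by
  let := (layeredMatrix γ A).toQuiver
  obtain rfl | hkl := eq_or_ne k l
  · exact ⟨Path.nil⟩
  · have jump : (l, i) ⟶ (k, i) := ⟨hk.trans_eq (layeredMatrix_apply_same_node γ A hkl i).symm⟩
    exact ⟨jump.toPath⟩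

theorem stmt2_general [PosMulStrictMono R] {A : Matrix n n R} (hA : A.IsIrreducible)
    (hγ : ∀ l, 0 < γ l) : (layeredMatrix γ A).IsIrreducible := by
  refine ⟨layeredMatrix_nonneg (fun l => (hγ l).le) hA.nonneg, ?_⟩
  rintro ⟨l, i⟩ ⟨k, j⟩
  let := A.toQuiver
  let := (layeredMatrix γ A).toQuiver
  obtain ⟨jump⟩ := nonempty_path_same_node A l (hγ k) i
  obtain ⟨path, path_pos⟩ := hA.connected i j
  let lift : Path (k, i) (k, j) := (layerInclusion A (hγ k)).mapPath path
  have lift_pos : 0 < lift.length := path_pos.trans_eq (length_mapPath _ path).symm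
  exact ⟨jump.comp lift, by rw [Path.length_comp]; exact Nat.add_pos_right _ lift_pos⟩

end LayeredMatrix

/-- If the directed graph of the nonnegative matrix `A` is strongly
connected (for every `i j` there is `m ≥ 1` with `(A^m) i j > 0`) and all
`γ l > 0`, then the directed graph of the block matrix `At` is strongly
connected. -/
theorem stmt2 {n p : ℕ} (A : Matrix (Fin n) (Fin n) ℝ) (γ : Fin p → ℝ)
    (hA0 : ∀ i j, 0 ≤ A i j)
    (hconn : ∀ i j : Fin n, ∃ m : ℕ, 1 ≤ m ∧ 0 < (A ^ m) i j)
    (hγ : ∀ l, 0 < γ l)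
    (At : Matrix (Fin p × Fin n) (Fin p × Fin n) ℝ)
    (hAt : ∀ li kj, At li kj =
      if kj.1 = li.1 then γ li.1 * A li.2 kj.2
      else if kj.2 = li.2 then γ kj.1 else 0) :
    ∀ a b : Fin p × Fin n, ∃ m : ℕ, 1 ≤ m ∧ 0 < (At ^ m) a b := by
  obtain rfl : At = layeredMatrix γ A := Matrix.ext fun li kj => hAt li kj
  have hirr := stmt2_general ((Matrix.isIrreducible_iff_exists_pow_pos hA0).2 hconn) hγ
  exact (Matrix.isIrreducible_iff_exists_pow_pos hirr.nonneg).1 hirr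
end

section
/- Let $(M_k)_{k\ge 1}$ be a sequence of $d\times d$ real matrices converging entrywise to a matrix $B$, and let $(L_k)_{k\ge 1}$ be a sequence of vectors in $\mathbb{R}^d$ such that the Cesàro averages $\frac{1}{t}\sum_{k=1}^t L_k$ converge to a vector $K \in \mathbb{R}^d$ and $\sup_{t\ge 1} \frac{1}{t}\sum_{k=1}^t \|L_k\| < \infty$. Then $\lim_{t\to\infty} \frac{1}{t}\sum_{k=1}^{t} M_k L_{t+1-k} = BK$. -/
open Filter

/-! Write `∑ k ≤ t, M k (L (t + 1 - k)) - t • B K` as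
`∑ k ≤ t, (M k - B) (L (t + 1 - k)) + B (∑ k ≤ t, L k - t • K)`. The second term is `o(t)` by
hypothesis. In the first, each of the finitely many summands in which `M k` is not yet close to `B`
is `o(t)`, because convergence of the Cesàro averages forces `L t = o(t)`; the remaining ones add
up to at most a small multiple of `∑ k ≤ t, ‖L k‖ = O(t)`. -/

open Asymptotics Finset
open scoped Topology

section Cesaro

variable {E F : Type*} [SeminormedAddCommGroup E] [NormedSpace ℝ E]
  [SeminormedAddCommGroup F] [NormedSpace ℝ F]

lemma sum_Icc_one_reflect {G : Type*} [AddCommMonoid G] (f : ℕ → G) (t : ℕ) :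
    ∑ k ∈ Icc 1 t, f (t + 1 - k) = ∑ k ∈ Icc 1 t, f k := by
  simpa [← Ico_add_one_right_eq_Icc] using sum_Ico_reflect f 1 (Nat.le_succ (t + 1))

lemma tendsto_one_div_smul_iff_isLittleO {S : ℕ → E} {K : E} :
    Tendsto (fun t : ℕ => (1 / (t : ℝ)) • S t) atTop (𝓝 K) ↔
      (fun t : ℕ => S t - (t : ℝ) • K) =o[atTop] (fun t : ℕ => (t : ℝ)) := by
  have hpos : ∀ᶠ t : ℕ in atTop, (0 : ℝ) < t := tendsto_natCast_atTop_atTop.eventually_gt_atTop 0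
  rw [tendsto_iff_norm_sub_tendsto_zero, ← isLittleO_norm_left,
    isLittleO_iff_tendsto' (hpos.mono fun t ht h0 => absurd h0 ht.ne')]
  refine tendsto_congr' (hpos.mono fun t ht => ?_)
  have hfactor : (1 / (t : ℝ)) • S t - K = (1 / (t : ℝ)) • (S t - (t : ℝ) • K) := by
    rw [smul_sub, smul_smul, one_div_mul_cancel ht.ne', one_smul]
  simp only [hfactor, norm_smul, norm_div, norm_one, Real.norm_natCast, one_div_mul_eq_div]

lemma isLittleO_comp_of_le {G : Type*} [Norm G] {f : ℕ → G} {φ : ℕ → ℕ}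
    (hf : f =o[atTop] (fun t : ℕ => (t : ℝ))) (hφ : Tendsto φ atTop atTop)
    (hle : ∀ᶠ t in atTop, φ t ≤ t) :
    (fun t => f (φ t)) =o[atTop] (fun t : ℕ => (t : ℝ)) := by
  refine (hf.comp_tendsto hφ).trans_isBigO (.of_bound 1 (hle.mono fun t ht => ?_))
  simpa using ht

lemma isLittleO_of_tendsto_cesaro {L : ℕ → E} {K : E}
    (h : Tendsto (fun t : ℕ => (1 / (t : ℝ)) • ∑ k ∈ Icc 1 t, L k) atTop (𝓝 K)) :
    L =o[atTop] (fun t : ℕ => (t : ℝ)) := by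
  have hD := tendsto_one_div_smul_iff_isLittleO.1 h
  have hD_pred := isLittleO_comp_of_le hD (tendsto_sub_atTop_nat 1) (.of_forall fun t => t.sub_le 1)
  have hK : (fun _ : ℕ => K) =o[atTop] (fun t : ℕ => (t : ℝ)) :=
    isLittleO_norm_left.1 <| isLittleO_const_left.2 <| .inr <|
      tendsto_norm_atTop_atTop.comp tendsto_natCast_atTop_atTop
  refine ((hD.sub hD_pred).add hK).congr' ?_ .rfl
  filter_upwards [eventually_ge_atTop 1] with t ht
  obtain ⟨s, rfl⟩ := Nat.exists_eq_add_of_le' ht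
  rw [Nat.add_sub_cancel, sum_Icc_succ_top (Nat.le_add_left 1 s)]
  push_cast
  module

lemma isBigO_natCast_of_one_div_mul_le {S : ℕ → ℝ} {C : ℝ} (hS : ∀ t, 0 ≤ S t)
    (hC : ∀ t : ℕ, 1 ≤ t → (1 / (t : ℝ)) * S t ≤ C) :
    S =O[atTop] (fun t : ℕ => (t : ℝ)) := by
  refine .of_bound C ?_
  filter_upwards [eventually_ge_atTop 1] with t ht
  have ht0 : (0 : ℝ) < t := by exact_mod_cast ht
  rw [Real.norm_of_nonneg (hS t), Real.norm_natCast, ← div_le_iff₀ ht0, ← one_div_mul_eq_div]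
  exact hC t ht

lemma norm_sum_reflect_sub_sum_reflect_le {A : ℕ → E →L[ℝ] F} {δ : ℝ} {N t : ℕ}
    (hA : ∀ k, N < k → ‖A k‖ ≤ δ) (hNt : N ≤ t) (L : ℕ → E) :
    ‖∑ k ∈ Icc 1 t, A k (L (t + 1 - k)) - ∑ k ∈ Icc 1 N, A k (L (t + 1 - k))‖ ≤
      δ * ∑ k ∈ Icc 1 t, ‖L k‖ := by
  have hδ : 0 ≤ δ := (norm_nonneg _).trans (hA (N + 1) N.lt_succ_self)
  have hterm : ∀ k ∈ Icc 1 t \ Icc 1 N, ‖A k (L (t + 1 - k))‖ ≤ δ * ‖L (t + 1 - k)‖ := by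
    intro k hk
    have hNk : N < k := by
      simp only [Finset.mem_sdiff, mem_Icc] at hk
      omega
    exact (A k).le_of_opNorm_le (hA k hNk) _
  rw [← sum_sdiff_eq_sub (Icc_subset_Icc_right hNt)]
  calc ‖∑ k ∈ Icc 1 t \ Icc 1 N, A k (L (t + 1 - k))‖
      ≤ ∑ k ∈ Icc 1 t \ Icc 1 N, δ * ‖L (t + 1 - k)‖ := norm_sum_le_of_le _ hterm
    _ ≤ ∑ k ∈ Icc 1 t, δ * ‖L (t + 1 - k)‖ :=
        sum_le_sum_of_subset_of_nonneg sdiff_subset fun _ _ _ => by positivity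
    _ = δ * ∑ k ∈ Icc 1 t, ‖L k‖ := by
        rw [← mul_sum, sum_Icc_one_reflect fun k => ‖L k‖]

lemma isLittleO_sum_reflect_of_fixed_range (A : ℕ → E →L[ℝ] F) {L : ℕ → E}
    (hL : L =o[atTop] (fun t : ℕ => (t : ℝ))) (N : ℕ) :
    (fun t : ℕ => ∑ k ∈ Icc 1 N, A k (L (t + 1 - k))) =o[atTop] (fun t : ℕ => (t : ℝ)) := by
  refine IsLittleO.fun_sum fun k hk => ((A k).isBigO_comp _ _).trans_isLittleO ?_
  have hk1 : 1 ≤ k := (mem_Icc.1 hk).1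
  exact isLittleO_comp_of_le hL ((tendsto_sub_atTop_nat k).comp (tendsto_add_atTop_nat 1))
    (.of_forall fun t => by omega)

lemma isLittleO_sum_reflect_of_tendsto_zero {A : ℕ → E →L[ℝ] F} {L : ℕ → E}
    (hA : Tendsto A atTop (𝓝 0)) (hL : L =o[atTop] (fun t : ℕ => (t : ℝ)))
    (hsum : (fun t : ℕ => ∑ k ∈ Icc 1 t, ‖L k‖) =O[atTop] (fun t : ℕ => (t : ℝ))) :
    (fun t : ℕ => ∑ k ∈ Icc 1 t, A k (L (t + 1 - k))) =o[atTop] (fun t : ℕ => (t : ℝ)) := by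
  refine isLittleO_iff.2 fun ε hε => ?_
  obtain ⟨C, hC, hsumC⟩ := hsum.exists_pos
  have hA_small : ∀ᶠ k in atTop, ‖A k‖ < ε / 2 / C :=
    (tendsto_zero_iff_norm_tendsto_zero.1 hA).eventually_lt_const (by positivity)
  obtain ⟨N, hN⟩ := eventually_atTop.1 hA_small
  have hhead := (isLittleO_sum_reflect_of_fixed_range A hL N).def (half_pos hε)
  filter_upwards [hhead, hsumC.bound, eventually_ge_atTop N] with t hhead_t hsum_t hNt
  have htail := norm_sum_reflect_sub_sum_reflect_le (fun k hk => (hN k hk.le).le) hNt L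
  calc ‖∑ k ∈ Icc 1 t, A k (L (t + 1 - k))‖
      ≤ ‖∑ k ∈ Icc 1 N, A k (L (t + 1 - k))‖ + ε / 2 / C * ∑ k ∈ Icc 1 t, ‖L k‖ :=
        (norm_le_norm_add_norm_sub' _ _).trans (by gcongr)
    _ ≤ ε / 2 * ‖(t : ℝ)‖ + ε / 2 / C * (C * ‖(t : ℝ)‖) := by
        gcongr
        exact (Real.le_norm_self _).trans hsum_t
    _ = ε * ‖(t : ℝ)‖ := by
        field_simp
        ring

theorem stmt10_general (M : ℕ → E →L[ℝ] F) (B : E →L[ℝ] F) (hM : Tendsto M atTop (𝓝 B))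
    (L : ℕ → E) (K : E)
    (hCes : Tendsto (fun t : ℕ => (1 / (t : ℝ)) • ∑ k ∈ Icc 1 t, L k) atTop (𝓝 K))
    (hBdd : ∃ C : ℝ, ∀ t : ℕ, 1 ≤ t → (1 / (t : ℝ)) * ∑ k ∈ Icc 1 t, ‖L k‖ ≤ C) :
    Tendsto (fun t : ℕ => (1 / (t : ℝ)) • ∑ k ∈ Icc 1 t, M k (L (t + 1 - k))) atTop
      (𝓝 (B K)) := by
  obtain ⟨C, hC⟩ := hBdd
  have hsum : (fun t : ℕ => ∑ k ∈ Icc 1 t, ‖L k‖) =O[atTop] (fun t : ℕ => (t : ℝ)) :=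
    isBigO_natCast_of_one_div_mul_le (fun _ => sum_nonneg fun _ _ => norm_nonneg _) hC
  have herror := isLittleO_sum_reflect_of_tendsto_zero (tendsto_sub_nhds_zero_iff.2 hM)
    (isLittleO_of_tendsto_cesaro hCes) hsum
  have hmain := (B.isBigO_comp _ _).trans_isLittleO (tendsto_one_div_smul_iff_isLittleO.1 hCes)
  refine tendsto_one_div_smul_iff_isLittleO.2 ((herror.add hmain).congr_left fun t => ?_)
  rw [← sum_Icc_one_reflect L]
  simp only [sub_apply, sum_sub_distrib, map_sub, map_sum, map_smul]
  abel

end Cesaro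

lemma tendsto_toContinuousLinearMap_toLin' {ι m n 𝕜 : Type*} [NontriviallyNormedField 𝕜]
    [CompleteSpace 𝕜] [Finite m] [Fintype n] [DecidableEq n] {l : Filter ι}
    {M : ι → Matrix m n 𝕜} {B : Matrix m n 𝕜}
    (hM : ∀ i j, Tendsto (fun k => M k i j) l (𝓝 (B i j))) :
    Tendsto (fun k => (M k).toLin'.toContinuousLinearMap) l
      (𝓝 B.toLin'.toContinuousLinearMap) := by
  have hcont : Continuous (Matrix.toLin' (R := 𝕜) (m := m) (n := n) ≪≫ₗ
      LinearMap.toContinuousLinearMap) :=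
    LinearMap.continuous_of_finiteDimensional (LinearEquiv.toLinearMap _)
  exact (hcont.tendsto B).comp (tendsto_pi_nhds.2 fun i => tendsto_pi_nhds.2 (hM i))

/-- If the matrices `M k` converge entrywise to `B`, the Cesàro
averages of the vectors `L k` converge to `K`, and the Cesàro averages of
`‖L k‖` are bounded, then `(1/t) ∑_{k=1}^t (M k).mulVec (L (t+1-k)) → B.mulVec K`. -/
theorem stmt10 {d : ℕ} (M : ℕ → Matrix (Fin d) (Fin d) ℝ)
    (B : Matrix (Fin d) (Fin d) ℝ)
    (hM : ∀ a b, Tendsto (fun k => M k a b) atTop (nhds (B a b)))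
    (L : ℕ → Fin d → ℝ) (K : Fin d → ℝ)
    (hCes : Tendsto (fun t : ℕ => (1 / (t : ℝ)) • ∑ k ∈ Finset.Icc 1 t, L k)
      atTop (nhds K))
    (hBdd : ∃ C : ℝ, ∀ t : ℕ, 1 ≤ t →
      (1 / (t : ℝ)) * ∑ k ∈ Finset.Icc 1 t, ‖L k‖ ≤ C) :
    Tendsto (fun t : ℕ =>
        (1 / (t : ℝ)) • ∑ k ∈ Finset.Icc 1 t, (M k).mulVec (L (t + 1 - k)))
      atTop (nhds (B.mulVec K)) :=
  stmt10_general (fun k => (M k).toLin'.toContinuousLinearMap) B.toLin'.toContinuousLinearMap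
    (tendsto_toContinuousLinearMap_toLin' hM) L K hCes hBdd
end

section
/- Let $M$ be a $d\times d$ real matrix such that $M^k$ converges entrywise to a matrix $B$ as $k\to\infty$. Let $\nu_0 \in \mathbb{R}^d$ and $(L_t)_{t\ge 1}$ be vectors in $\mathbb{R}^d$ with $\frac{1}{t}\sum_{k=1}^t L_k \to K$ and $\sup_{t\ge 1}\frac{1}{t}\sum_{k=1}^t\|L_k\| < \infty$, and define $\nu_{t+1} = M\nu_t + L_{t+1}$ for $t \ge 0$. Then $\lim_{t\to\infty} \frac{1}{t}\nu_t = BK$. -/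
open Filter

/-!
Put `D k = T ^ k - B`. Since `B` is the limit of the powers of `T`, one has
`T * B = B * T = B * B = B`, hence `D j * D k = D (j + k)`: the norms `‖D k‖` are submultiplicative
and tend to `0`, so they are summable. Unrolling the recurrence gives
`ν t = T ^ t (ν 0) + B (∑ 1 ≤ k ≤ t, L k) + ∑ 0 ≤ k < t, D k (L (t - k))`. After division by `t` the
first term vanishes because the powers are bounded, the second tends to `B K`, and the third is
dominated by the convolution of the summable sequence `‖D k‖` with the sequence `‖L n‖ / n`. The
latter tends to `0` because the averages of `L` converge, and then so does the convolution, by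
Tannery's theorem.
-/

open Finset Topology

section Submultiplicative

variable {u : ℕ → ℝ}

lemma le_pow_mul_of_submultiplicative (hu : ∀ n, 0 ≤ u n) (hmul : ∀ m n, u (m + n) ≤ u m * u n)
    (m q r : ℕ) : u (q * m + r) ≤ u m ^ q * u r := by
  induction q with
  | zero => simp
  | succ q ih =>
    calc u ((q + 1) * m + r) = u (m + (q * m + r)) := by ring_nf
      _ ≤ u m * u (q * m + r) := hmul _ _
      _ ≤ u m * (u m ^ q * u r) := by gcongr; exact hu m
      _ = u m ^ (q + 1) * u r := by ring

lemma summable_of_submultiplicative (hu : ∀ n, 0 ≤ u n) (hmul : ∀ m n, u (m + n) ≤ u m * u n)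
    {m : ℕ} [NeZero m] (hm : u m < 1) : Summable u := by
  have hprod : Summable fun p : ℕ × Fin m => u m ^ p.1 * u p.2 :=
    (summable_geometric_of_lt_one (hu m) hm).mul_of_nonneg (g := fun r : Fin m => u r)
      Summable.of_finite (fun q => pow_nonneg (hu m) q) (fun r => hu r)
  rw [← (Nat.divModEquiv m).symm.summable_iff]
  exact hprod.of_nonneg_of_le (fun _ => hu _)
    fun p => le_pow_mul_of_submultiplicative hu hmul m p.1 p.2

lemma summable_of_submultiplicative_of_tendsto_zero (hu : ∀ n, 0 ≤ u n)
    (hmul : ∀ m n, u (m + n) ≤ u m * u n) (hlim : Tendsto u atTop (𝓝 0)) : Summable u := by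
  obtain ⟨m, hm, hm_pos⟩ :=
    ((hlim.eventually_lt_const one_pos).and (eventually_gt_atTop 0)).exists
  have : NeZero m := ⟨hm_pos.ne'⟩
  exact summable_of_submultiplicative hu hmul hm

end Submultiplicative

section PowerLimit

variable {M : Type*} [Monoid M] [TopologicalSpace M] [ContinuousMul M] [T2Space M] {a b : M}

lemma pow_mul_eq_of_tendsto_pow (h : Tendsto (fun k => a ^ k) atTop (𝓝 b)) (j : ℕ) :
    a ^ j * b = b := by
  refine tendsto_nhds_unique (h.const_mul (a ^ j)) ?_
  simpa only [← pow_add, add_comm j] using (tendsto_add_atTop_iff_nat j).2 h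

lemma mul_pow_eq_of_tendsto_pow (h : Tendsto (fun k => a ^ k) atTop (𝓝 b)) (j : ℕ) :
    b * a ^ j = b := by
  refine tendsto_nhds_unique (h.mul_const (a ^ j)) ?_
  simpa only [← pow_add] using (tendsto_add_atTop_iff_nat j).2 h

lemma isIdempotentElem_of_tendsto_pow (h : Tendsto (fun k => a ^ k) atTop (𝓝 b)) :
    IsIdempotentElem b := by
  refine tendsto_nhds_unique (h.mul_const b) ?_
  simp only [pow_mul_eq_of_tendsto_pow h, tendsto_const_nhds]

lemma pow_sub_mul_pow_sub_of_tendsto_pow {R : Type*} [Ring R] [TopologicalSpace R]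
    [ContinuousMul R] [T2Space R] {a b : R} (h : Tendsto (fun k => a ^ k) atTop (𝓝 b))
    (j k : ℕ) : (a ^ j - b) * (a ^ k - b) = a ^ (j + k) - b := by
  rw [sub_mul, mul_sub, mul_sub, ← pow_add, pow_mul_eq_of_tendsto_pow h,
    mul_pow_eq_of_tendsto_pow h, (isIdempotentElem_of_tendsto_pow h).eq, sub_self, sub_zero]

lemma summable_norm_pow_sub_of_tendsto_pow {R : Type*} [NormedRing R] {a b : R}
    (h : Tendsto (fun k => a ^ k) atTop (𝓝 b)) : Summable fun k => ‖a ^ k - b‖ := by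
  refine summable_of_submultiplicative_of_tendsto_zero (fun _ => norm_nonneg _) (fun j k => ?_)
    (tendsto_iff_norm_sub_tendsto_zero.1 h)
  rw [← pow_sub_mul_pow_sub_of_tendsto_pow h]
  exact norm_mul_le _ _

end PowerLimit

section Convolution

lemma sum_range_sub_eq_sum_Icc {E : Type*} [AddCommMonoid E] (f : ℕ → E) (t : ℕ) :
    ∑ k ∈ range t, f (t - k) = ∑ k ∈ Icc 1 t, f k := by
  rw [← Nat.Ico_zero_eq_range, sum_Ico_reflect f 0 t.le_succ, Nat.add_sub_cancel_left,
    Nat.sub_zero, Ico_add_one_right_eq_Icc]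

lemma tendsto_sum_range_mul_sub_zero {R : Type*} [NormedRing R] [CompleteSpace R] {a u : ℕ → R}
    (ha : Summable fun k => ‖a k‖) (hu : Tendsto u atTop (𝓝 0)) :
    Tendsto (fun t => ∑ k ∈ range t, a k * u (t - k)) atTop (𝓝 0) := by
  obtain ⟨C, hC⟩ := hu.norm.bddAbove_range
  have hle : ∀ n, ‖u n‖ ≤ C := fun n => hC ⟨n, rfl⟩
  have hterm : ∀ k, Tendsto (fun t => (range t : Set ℕ).indicator (fun k => a k * u (t - k)) k)
      atTop (𝓝 0) := fun k => by
    have hshift : Tendsto (fun t => a k * u (t - k)) atTop (𝓝 0) := by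
      simpa only [mul_zero, Function.comp_def] using
        (hu.comp (tendsto_sub_atTop_nat k)).const_mul (a k)
    exact squeeze_zero_norm (fun t => norm_indicator_le_norm_self _ _)
      (tendsto_zero_iff_norm_tendsto_zero.1 hshift)
  have hbound : ∀ t k, ‖(range t : Set ℕ).indicator (fun k => a k * u (t - k)) k‖ ≤ ‖a k‖ * C :=
    fun t k => (norm_indicator_le_norm_self _ _).trans <|
      (norm_mul_le _ _).trans (mul_le_mul_of_nonneg_left (hle _) (norm_nonneg _))
  have hlim := tendsto_tsum_of_dominated_convergence (ha.mul_right C) hterm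
    (Eventually.of_forall hbound)
  rw [tsum_zero] at hlim
  exact hlim.congr fun t => (sum_eq_tsum_indicator _ _).symm

end Convolution

section Average

lemma tendsto_one_div_smul_of_tendsto_average {E : Type*} [AddCommGroup E] [Module ℝ E]
    [TopologicalSpace E] [IsTopologicalAddGroup E] [ContinuousSMul ℝ E] {L : ℕ → E} {K : E}
    (hL : Tendsto (fun t : ℕ => (1 / (t : ℝ)) • ∑ k ∈ Icc 1 t, L k) atTop (𝓝 K)) :
    Tendsto (fun t : ℕ => (1 / (t : ℝ)) • L t) atTop (𝓝 0) := by
  rw [← tendsto_add_atTop_iff_nat 1]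
  have hratio : Tendsto (fun n : ℕ => (n : ℝ) / (n + 1)) atTop (𝓝 1) :=
    tendsto_natCast_div_add_atTop 1
  have hdiff := ((tendsto_add_atTop_iff_nat 1).2 hL).sub (hratio.smul hL)
  rw [one_smul, sub_self] at hdiff
  refine hdiff.congr' ?_
  filter_upwards [eventually_ne_atTop 0] with n hn
  have hscale : (n : ℝ) / (n + 1) * (1 / n) = 1 / ((n + 1 : ℕ) : ℝ) := by
    push_cast
    field_simp
  rw [smul_smul, hscale, ← smul_sub, sum_Icc_succ_top (by lia), add_sub_cancel_left]

variable {E F : Type*} [NormedAddCommGroup E] [NormedSpace ℝ E] [NormedAddCommGroup F]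
  [NormedSpace ℝ F]

lemma tendsto_average_sum_apply_sub_zero {A : ℕ → E →L[ℝ] F} (hA : Summable fun k => ‖A k‖)
    {L : ℕ → E} (hL : Tendsto (fun t : ℕ => (1 / (t : ℝ)) • L t) atTop (𝓝 0)) :
    Tendsto (fun t : ℕ => (1 / (t : ℝ)) • ∑ k ∈ range t, A k (L (t - k))) atTop (𝓝 0) := by
  have hconv := tendsto_sum_range_mul_sub_zero (hA.congr fun k => (norm_norm (A k)).symm)
    (tendsto_zero_iff_norm_tendsto_zero.1 hL)
  refine squeeze_zero_norm (fun t => ?_) hconv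
  rw [smul_sum]
  refine norm_sum_le_of_le _ fun k hk => ?_
  have hpos : (0 : ℝ) < (t - k : ℕ) := by exact_mod_cast Nat.sub_pos_of_lt (mem_range.1 hk)
  have hscale : ‖1 / (t : ℝ)‖ ≤ ‖1 / ((t - k : ℕ) : ℝ)‖ := by
    simp only [norm_div, norm_one, RCLike.norm_natCast]
    gcongr
    exact t.sub_le k
  calc ‖(1 / (t : ℝ)) • A k (L (t - k))‖ = ‖A k ((1 / (t : ℝ)) • L (t - k))‖ := by rw [map_smul]
    _ ≤ ‖A k‖ * ‖(1 / (t : ℝ)) • L (t - k)‖ := (A k).le_opNorm _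
    _ ≤ ‖A k‖ * ‖(1 / ((t - k : ℕ) : ℝ)) • L (t - k)‖ := by
      rw [norm_smul, norm_smul]
      gcongr

lemma tendsto_average_sum_apply_sub {A : ℕ → E →L[ℝ] F} {B : E →L[ℝ] F}
    (hA : Summable fun k => ‖A k - B‖) {L : ℕ → E} {K : E}
    (hL : Tendsto (fun t : ℕ => (1 / (t : ℝ)) • ∑ k ∈ Icc 1 t, L k) atTop (𝓝 K)) :
    Tendsto (fun t : ℕ => (1 / (t : ℝ)) • ∑ k ∈ range t, A k (L (t - k))) atTop (𝓝 (B K)) := by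
  have hlimit := (B.continuous.tendsto K).comp hL
  have herror :=
    tendsto_average_sum_apply_sub_zero hA (tendsto_one_div_smul_of_tendsto_average hL)
  rw [← add_zero (B K)]
  refine (hlimit.add herror).congr fun t => ?_
  simp only [Function.comp_apply, map_smul, map_sum, ← sum_range_sub_eq_sum_Icc,
    sub_apply, sum_sub_distrib, ← smul_add, add_sub_cancel]

end Average

section Recurrence

lemma eq_pow_smul_add_sum_of_recurrence {S E : Type*} [Monoid S] [AddCommMonoid E]
    [DistribMulAction S E] {a : S} {ν L : ℕ → E}
    (hrec : ∀ t, ν (t + 1) = a • ν t + L (t + 1)) (t : ℕ) :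
    ν t = a ^ t • ν 0 + ∑ k ∈ range t, a ^ k • L (t - k) := by
  induction t with
  | zero => simp
  | succ t ih =>
    rw [hrec, ih, sum_range_succ', smul_add, smul_sum]
    simp only [smul_smul, ← pow_succ', Nat.add_sub_add_right, pow_zero, one_smul, Nat.sub_zero,
      add_assoc]

end Recurrence

section MatrixOperator

variable {n : Type*} [Fintype n] [DecidableEq n]

/-- The algebra isomorphism sending a real matrix `M` to the continuous linear map `v ↦ M *ᵥ v`,
which turns entrywise convergence into convergence in operator norm. The space `n → ℝ` carries the
sup norm; in finite dimension any other norm gives the same topology on operators. -/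
noncomputable def mulVecCLM : Matrix n n ℝ ≃ₐ[ℝ] ((n → ℝ) →L[ℝ] (n → ℝ)) :=
  Matrix.toLinAlgEquiv'.trans (Module.End.toContinuousLinearMap (n → ℝ))

lemma tendsto_mulVecCLM_pow {M B : Matrix n n ℝ}
    (h : ∀ a b, Tendsto (fun k => (M ^ k) a b) atTop (𝓝 (B a b))) :
    Tendsto (fun k => mulVecCLM M ^ k) atTop (𝓝 (mulVecCLM B)) := by
  have hpow : Tendsto (fun k => M ^ k) atTop (𝓝 B) :=
    tendsto_pi_nhds.2 fun a => tendsto_pi_nhds.2 (h a)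
  have hcont : Continuous (mulVecCLM (n := n)) :=
    mulVecCLM.toLinearMap.continuous_of_finiteDimensional
  simpa only [Function.comp_def, map_pow] using (hcont.tendsto B).comp hpow

end MatrixOperator

theorem stmt11_general {E : Type*} [NormedAddCommGroup E] [NormedSpace ℝ E] {T B : E →L[ℝ] E}
    (hT : Tendsto (fun k => T ^ k) atTop (𝓝 B)) {L : ℕ → E} {K : E}
    (hL : Tendsto (fun t : ℕ => (1 / (t : ℝ)) • ∑ k ∈ Icc 1 t, L k) atTop (𝓝 K))
    {ν : ℕ → E} (hrec : ∀ t, ν (t + 1) = T (ν t) + L (t + 1)) :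
    Tendsto (fun t : ℕ => (1 / (t : ℝ)) • ν t) atTop (𝓝 (B K)) := by
  have hsolution : ∀ t, ν t = (T ^ t) (ν 0) + ∑ k ∈ range t, (T ^ k) (L (t - k)) := by
    simpa only [ContinuousLinearMap.smul_def] using
      eq_pow_smul_add_sum_of_recurrence (a := T) hrec
  have horbit : Tendsto (fun t => (T ^ t) (ν 0)) atTop (𝓝 (B (ν 0))) :=
    hT.eval_const (ν 0)
  have hinitial : Tendsto (fun t : ℕ => (1 / (t : ℝ)) • (T ^ t) (ν 0)) atTop (𝓝 0) := by
    simpa only [zero_smul] using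
      (tendsto_one_div_atTop_nhds_zero_nat (𝕜 := ℝ)).smul horbit
  have hsummable : Summable fun k => ‖T ^ k - B‖ := summable_norm_pow_sub_of_tendsto_pow hT
  have hforcing := tendsto_average_sum_apply_sub (A := fun k => T ^ k) hsummable hL
  rw [← zero_add (B K)]
  refine (hinitial.add hforcing).congr fun t => ?_
  rw [← smul_add, ← hsolution]

/-- If `M^k → B` entrywise, the Cesàro averages of `(L k)`
converge to `K` with bounded Cesàro averages of norms, and
`ν (t+1) = M.mulVec (ν t) + L (t+1)`, then `(1/t) • ν t → B.mulVec K`. -/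
theorem stmt11 {d : ℕ} (M B : Matrix (Fin d) (Fin d) ℝ)
    (hM : ∀ a b, Tendsto (fun k => (M ^ k) a b) atTop (nhds (B a b)))
    (ν0 : Fin d → ℝ) (L : ℕ → Fin d → ℝ) (K : Fin d → ℝ)
    (hCes : Tendsto (fun t : ℕ => (1 / (t : ℝ)) • ∑ k ∈ Finset.Icc 1 t, L k)
      atTop (nhds K))
    (hBdd : ∃ C : ℝ, ∀ t : ℕ, 1 ≤ t →
      (1 / (t : ℝ)) * ∑ k ∈ Finset.Icc 1 t, ‖L k‖ ≤ C)
    (ν : ℕ → Fin d → ℝ) (h0 : ν 0 = ν0)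
    (hrec : ∀ t : ℕ, ν (t + 1) = M.mulVec (ν t) + L (t + 1)) :
    Tendsto (fun t : ℕ => (1 / (t : ℝ)) • ν t) atTop (nhds (B.mulVec K)) := by
  exact stmt11_general (tendsto_mulVecCLM_pow hM) hCes hrec
end
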